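/- Fix an integer r ≥ 3 and let A = exp(πi/(2r)). Then the sum of Δ_i · Δ_j · Δ_k over all admissible triples (i,j,k) ∈ I^3 equals (Σ_{n=0}^{r−2} Δ_n^2)^2; that is, the computation of the invariant of the trivial genus-2 handlebody-knot via a theta-curve diagram agrees with the computation via a handcuffs diagram. -/

import Mathlib

/-- The variable `A = exp(πi/(2r))`. -/
noncomputable def A (r : ℕ) : ℂ := Complex.exp (Real.pi * Complex.I / (2 * r))

/-- The quantum dimension `Δ_n = (−1)^n (A^{2(n+1)} − A^{−2(n+1)})/(A^2 − A^{−2})`. -/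
noncomputable def Δ (r : ℕ) (n : ℕ) : ℂ :=
  (-1) ^ n * (A r ^ (2 * ((n : ℤ) + 1)) - A r ^ (-(2 * ((n : ℤ) + 1)))) /
    (A r ^ (2 : ℤ) - A r ^ (-2 : ℤ))

/-- A triple `(i,j,k)` of colors in `I = {0,…,r−2}` is *admissible* if
`i ≤ j+k`, `j ≤ i+k`, `k ≤ i+j`, `i+j+k` is even, and `i+j+k ≤ 2(r−2)`. -/
def Admissible (r i j k : ℕ) : Prop :=
  i ≤ r - 2 ∧ j ≤ r - 2 ∧ k ≤ r - 2 ∧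
  i ≤ j + k ∧ j ≤ i + k ∧ k ≤ i + j ∧ 2 ∣ (i + j + k) ∧ i + j + k ≤ 2 * (r - 2)

instance (r i j k : ℕ) : Decidable (Admissible r i j k) := by
  unfold Admissible; infer_instance

/-- `A^{2k} + A^{-2k}`. -/
noncomputable def Cc (r : ℕ) (k : ℤ) : ℂ := A r ^ (2 * k) + A r ^ (-(2 * k))

lemma A_ne (r : ℕ) : A r ≠ 0 := Complex.exp_ne_zero _

lemma A_pow (r : ℕ) (hr : 3 ≤ r) : A r ^ (4 * (r : ℤ)) = 1 := by
  have h0 : (r : ℂ) ≠ 0 := by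
    have : r ≠ 0 := by omega
    exact_mod_cast this
  unfold A
  rw [← Complex.exp_int_mul, ← Complex.exp_two_pi_mul_I]
  congr 1
  push_cast
  field_simp
  ring

lemma Cc_neg (r : ℕ) (k : ℤ) : Cc r (-k) = Cc r k := by
  unfold Cc
  rw [show -(2 * -k) = 2 * k by ring, show 2 * -k = -(2 * k) by ring, add_comm]

lemma Cc_refl (r : ℕ) (hr : 3 ≤ r) (k : ℤ) : Cc r (2 * r - k) = Cc r k := by
  unfold Cc
  rw [show 2 * (2 * (r : ℤ) - k) = 4 * r + -(2 * k) by ring,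
    show -(4 * (r : ℤ) + -(2 * k)) = 2 * k - 4 * r by ring,
    zpow_add₀ (A_ne r), zpow_sub₀ (A_ne r), A_pow r hr]
  ring

/-- the denominator -/
noncomputable def Dd (r : ℕ) : ℂ := A r ^ (2 : ℤ) - A r ^ (-2 : ℤ)

lemma Delta_mul (r i j : ℕ) :
    Δ r i * Δ r j = (-1) ^ (i + j) * (Cc r (i + j + 2) - Cc r ((i : ℤ) - j)) / Dd r ^ 2 := by
  have h0 := A_ne r
  have e : (A r ^ (2 * ((i : ℤ) + 1)) - A r ^ (-(2 * ((i : ℤ) + 1)))) *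
      (A r ^ (2 * ((j : ℤ) + 1)) - A r ^ (-(2 * ((j : ℤ) + 1)))) =
      Cc r (i + j + 2) - Cc r ((i : ℤ) - j) := by
    unfold Cc
    simp only [sub_mul, mul_sub, ← zpow_add₀ h0]
    ring_nf
  rw [← e]
  unfold Δ Dd
  rw [div_mul_div_comm, pow_add]
  congr 1 <;> ring

lemma Delta_eq (r k : ℕ) :
    Δ r k = (-1) ^ k * (Cc r (k + 2) - Cc r k) / Dd r ^ 2 := by
  have h := Delta_mul r k 0
  by_cases hD : Dd r = 0
  · have : Δ r k = 0 := by
      unfold Δ; unfold Dd at hD; rw [hD, div_zero]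
    rw [this, hD]; simp
  · have h1 : Δ r 0 = 1 := by
      unfold Δ; unfold Dd at hD
      simp only [pow_zero, one_mul, Nat.cast_zero, zero_add, mul_one]
      exact div_self hD
    rw [h1] at h
    simpa using h

lemma tele (r a m : ℕ) :
    ∑ t ∈ Finset.range m, Δ r (a + 2 * t) =
      (-1) ^ a * (Cc r (a + 2 * m) - Cc r a) / Dd r ^ 2 := by
  induction m with
  | zero => simp
  | succ m ih =>
    rw [Finset.sum_range_succ, ih, Delta_eq, pow_add, pow_mul]
    push_cast
    rw [show (a : ℤ) + 2 * (m + 1) = a + 2 * m + 2 by ring]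
    ring

lemma fuse_aux (r i j a m : ℕ) (hr : 3 ≤ r)
    (ha : (a : ℤ) = i - j ∨ (a : ℤ) = -((i : ℤ) - j))
    (hm : (a : ℤ) + 2 * m = i + j + 2 ∨ (a : ℤ) + 2 * m = 2 * r - (i + j + 2))
    (hset : (Finset.range (r - 1)).filter (fun k => Admissible r i j k) =
      (Finset.range m).image (fun t => a + 2 * t)) :
    ∑ k ∈ (Finset.range (r - 1)).filter (fun k => Admissible r i j k), Δ r k =
      Δ r i * Δ r j := by
  rw [hset, Finset.sum_image (by intro x _ y _ h; simp at h; exact h), tele, Delta_mul]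
  have h1 : Cc r a = Cc r ((i : ℤ) - j) := by
    rcases ha with h | h <;> rw [h]
    exact Cc_neg _ _
  have h2 : Cc r (a + 2 * m) = Cc r (i + j + 2) := by
    rcases hm with h | h <;> rw [h]
    exact Cc_refl _ hr _
  have h3 : (-1 : ℂ) ^ a = (-1) ^ (i + j) := by
    have hp : a % 2 = (i + j) % 2 := by omega
    rw [neg_one_pow_eq_pow_mod_two (n := a), hp, ← neg_one_pow_eq_pow_mod_two]
  rw [h1, h2, h3]

lemma fuse (r i j : ℕ) (hr : 3 ≤ r) (hi : i < r - 1) (hj : j < r - 1) :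
    ∑ k ∈ (Finset.range (r - 1)).filter (fun k => Admissible r i j k), Δ r k =
      Δ r i * Δ r j := by
  apply fuse_aux r i j (max i j - min i j) (min (min i j + 1) (r - 1 - max i j)) hr
  · omega
  · omega
  · ext k
    rw [Finset.mem_filter, Finset.mem_image]
    simp only [Finset.mem_range]
    unfold Admissible
    constructor
    · rintro ⟨h, h1⟩
      exact ⟨(k - (max i j - min i j)) / 2, by omega, by omega⟩
    · rintro ⟨t, ht, rfl⟩
      omega

/-- the sum of `Δ_i Δ_j Δ_k` over all admissible triples `(i,j,k) ∈ I³`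
equals `(Σ_{n=0}^{r−2} Δ_n²)²`: the theta-curve computation of the invariant of the
trivial genus-2 handlebody-knot agrees with the handcuffs-diagram computation. -/
theorem theta_curve_eq_handcuffs (r : ℕ) (hr : 3 ≤ r) :
    ∑ p ∈ (Finset.range (r - 1) ×ˢ Finset.range (r - 1) ×ˢ Finset.range (r - 1)).filter
        (fun p => Admissible r p.1 p.2.1 p.2.2),
      Δ r p.1 * Δ r p.2.1 * Δ r p.2.2 =
    (∑ n ∈ Finset.range (r - 1), (Δ r n) ^ 2) ^ 2 := by
  rw [Finset.sum_filter, Finset.sum_product, sq (∑ n ∈ Finset.range (r - 1), (Δ r n) ^ 2),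
    Finset.sum_mul_sum]
  refine Finset.sum_congr rfl fun i hi => ?_
  rw [Finset.sum_product]
  refine Finset.sum_congr rfl fun j hj => ?_
  rw [← Finset.sum_filter]
  dsimp only
  rw [← Finset.mul_sum,
    fuse r i j hr (Finset.mem_range.1 hi) (Finset.mem_range.1 hj)]
  ring
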